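/- arXiv:1304.3032 — 4 statements merged into one kernel-verified Lean document; each statement's English description precedes it below -/
import Mathlib

section
/- There exists a constant c₀ with 0 < c₀ < 1 such that the following holds for every natural number N: if g : ℂ → ℂ is holomorphic on the open unit disk {z : ℂ | ‖z‖ < 1}, satisfies ‖g z‖ < 1 for all z with ‖z‖ < 1, and there is a finite set S ⊆ {z : ℂ | ‖z‖ < 1/2} with cardinality N such that g a = 0 for every a ∈ S, then ‖g z‖ < c₀ ^ N for all z with ‖z‖ < 1/2. -/
/-!
A zero `a` of a holomorphic self-map `f` of the unit disk can be divided out by the Blaschke factor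
`φ_a(z) = (z - a) / (1 - conj a * z)` without losing the bound `‖f‖ ≤ 1`: the map `f ∘ φ_a⁻¹`
vanishes at the origin, and the Schwarz lemma bounds its difference quotient there. Dividing out
all the zeros gives `‖f z‖ ≤ ∏ ‖φ_a z‖`. If `a` and `z` have modulus at most `r < 1`, then
`‖φ_a z‖ ≤ 2r / (1 + r²) < 1`, so every zero contributes a definite factor (`4/5` for `r = 1/2`).
-/

open ComplexConjugate Metric Set

/-- The Blaschke factor of the unit disk with zero `a`, normalised without a unimodular constant,
so that its inverse on the disk is the Blaschke factor with zero `-a`. Its modulus is the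
pseudo-hyperbolic distance from `a` to `z`. -/
noncomputable def blaschkeFactor (a z : ℂ) : ℂ := (z - a) / (1 - conj a * z)

@[simp]
lemma blaschkeFactor_neg_zero (a : ℂ) : blaschkeFactor (-a) 0 = a := by
  simp [blaschkeFactor]

lemma one_sub_conj_mul_ne_zero {a z : ℂ} (ha : ‖a‖ < 1) (hz : ‖z‖ ≤ 1) :
    1 - conj a * z ≠ 0 := by
  refine sub_ne_zero.2 fun h ↦ ?_
  have : ‖a‖ * ‖z‖ = 1 := by simpa using congrArg norm h.symm
  nlinarith [norm_nonneg a]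

lemma blaschkeFactor_eq_zero_iff {a z : ℂ} (ha : ‖a‖ < 1) (hz : ‖z‖ ≤ 1) :
    blaschkeFactor a z = 0 ↔ z = a := by
  rw [blaschkeFactor, div_eq_zero_iff, or_iff_left (one_sub_conj_mul_ne_zero ha hz), sub_eq_zero]

lemma differentiableOn_blaschkeFactor {a : ℂ} (ha : ‖a‖ < 1) :
    DifferentiableOn ℂ (blaschkeFactor a) (closedBall 0 1) := by
  unfold blaschkeFactor
  have hden : ∀ z ∈ closedBall (0 : ℂ) 1, 1 - conj a * z ≠ 0 := fun z hz ↦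
    one_sub_conj_mul_ne_zero ha (mem_closedBall_zero_iff.1 hz)
  fun_prop (disch := assumption)

lemma blaschkeFactor_neg_blaschkeFactor {a z : ℂ} (ha : ‖a‖ < 1) (hz : ‖z‖ ≤ 1) :
    blaschkeFactor (-a) (blaschkeFactor a z) = z := by
  have hz₀ := one_sub_conj_mul_ne_zero ha hz
  have ha₀ := one_sub_conj_mul_ne_zero ha ha.le
  have hnum : blaschkeFactor a z + a = z * (1 - conj a * a) / (1 - conj a * z) := by
    rw [blaschkeFactor, div_add' _ _ _ hz₀]
    ring
  have hden : 1 + conj a * blaschkeFactor a z = (1 - conj a * a) / (1 - conj a * z) := by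
    rw [blaschkeFactor, mul_div_assoc', add_div' _ _ _ hz₀]
    ring
  rw [blaschkeFactor, sub_neg_eq_add, map_neg, neg_mul, sub_neg_eq_add, hnum, hden,
    div_div_div_cancel_right₀ hz₀, mul_div_cancel_right₀ _ ha₀]

lemma norm_one_sub_conj_mul_sq (a z : ℂ) :
    ‖1 - conj a * z‖ ^ 2 = ‖z - a‖ ^ 2 + (1 - ‖a‖ ^ 2) * (1 - ‖z‖ ^ 2) := by
  simp only [← Complex.normSq_eq_norm_sq, Complex.normSq_apply, Complex.sub_re, Complex.sub_im,
    Complex.mul_re, Complex.mul_im, Complex.conj_re, Complex.conj_im, Complex.one_re,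
    Complex.one_im]
  ring

lemma one_sub_norm_blaschkeFactor_sq {a z : ℂ} (ha : ‖a‖ < 1) (hz : ‖z‖ ≤ 1) :
    1 - ‖blaschkeFactor a z‖ ^ 2 = (1 - ‖a‖ ^ 2) * (1 - ‖z‖ ^ 2) / ‖1 - conj a * z‖ ^ 2 := by
  have hden : ‖1 - conj a * z‖ ≠ 0 := norm_ne_zero_iff.2 (one_sub_conj_mul_ne_zero ha hz)
  rw [blaschkeFactor, norm_div, div_pow, eq_div_iff (pow_ne_zero 2 hden), sub_mul,
    div_mul_cancel₀ _ (pow_ne_zero 2 hden), norm_one_sub_conj_mul_sq]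
  ring

lemma mapsTo_blaschkeFactor_ball {a : ℂ} (ha : ‖a‖ < 1) :
    MapsTo (blaschkeFactor a) (ball 0 1) (ball 0 1) := by
  intro z hz
  rw [mem_ball_zero_iff] at hz ⊢
  have hden : 0 < ‖1 - conj a * z‖ := norm_pos_iff.2 (one_sub_conj_mul_ne_zero ha hz.le)
  have ha' : 0 < 1 - ‖a‖ ^ 2 := by nlinarith [norm_nonneg a]
  have hz' : 0 < 1 - ‖z‖ ^ 2 := by nlinarith [norm_nonneg z]
  have hpos : 0 < 1 - ‖blaschkeFactor a z‖ ^ 2 := by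
    rw [one_sub_norm_blaschkeFactor_sq ha hz.le]
    positivity
  exact (sq_lt_one_iff₀ (norm_nonneg _)).1 (sub_pos.1 hpos)

lemma norm_blaschkeFactor_le {a z : ℂ} (ha : ‖a‖ < 1) (hz : ‖z‖ ≤ 1) :
    ‖blaschkeFactor a z‖ ≤ (‖a‖ + ‖z‖) / (1 + ‖a‖ * ‖z‖) := by
  have hden : 0 < ‖1 - conj a * z‖ := norm_pos_iff.2 (one_sub_conj_mul_ne_zero ha hz)
  have hden_le : ‖1 - conj a * z‖ ≤ 1 + ‖a‖ * ‖z‖ := by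
    simpa using norm_sub_le (1 : ℂ) (conj a * z)
  have ha' : 0 ≤ 1 - ‖a‖ ^ 2 := by nlinarith [norm_nonneg a]
  have hz' : 0 ≤ 1 - ‖z‖ ^ 2 := by nlinarith [norm_nonneg z]
  refine (sq_le_sq₀ (norm_nonneg _) (by positivity)).1 (sub_le_sub_iff_left 1 |>.1 ?_)
  calc 1 - ((‖a‖ + ‖z‖) / (1 + ‖a‖ * ‖z‖)) ^ 2
      = (1 - ‖a‖ ^ 2) * (1 - ‖z‖ ^ 2) / (1 + ‖a‖ * ‖z‖) ^ 2 := by field_simp; ring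
    _ ≤ (1 - ‖a‖ ^ 2) * (1 - ‖z‖ ^ 2) / ‖1 - conj a * z‖ ^ 2 := by gcongr
    _ = 1 - ‖blaschkeFactor a z‖ ^ 2 := (one_sub_norm_blaschkeFactor_sq ha hz).symm

lemma strictMonoOn_add_div_one_add_mul {t : ℝ} (ht₀ : 0 ≤ t) (ht₁ : t < 1) :
    StrictMonoOn (fun x : ℝ ↦ (x + t) / (1 + x * t)) (Ici 0) := by
  intro x (hx : 0 ≤ x) y (hy : 0 ≤ y) hxy
  have ht : 0 < 1 - t ^ 2 := by nlinarith
  beta_reduce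
  rw [div_lt_div_iff₀ (by positivity) (by positivity)]
  linear_combination mul_pos (sub_pos.2 hxy) ht

section NormedSpace

variable {E : Type*} [NormedAddCommGroup E] [NormedSpace ℂ E]

lemma exists_eq_blaschkeFactor_smul_of_eq_zero [CompleteSpace E] {f : ℂ → E} {a : ℂ}
    (hf : DifferentiableOn ℂ f (ball 0 1)) (hf₁ : MapsTo f (ball 0 1) (closedBall 0 1))
    (ha : ‖a‖ < 1) (hfa : f a = 0) :
    ∃ k : ℂ → E, DifferentiableOn ℂ k (ball 0 1) ∧ MapsTo k (ball 0 1) (closedBall 0 1) ∧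
      EqOn f (fun z ↦ blaschkeFactor a z • k z) (ball 0 1) := by
  have ha' : ‖-a‖ < 1 := by rwa [norm_neg]
  set F : ℂ → E := f ∘ blaschkeFactor (-a)
  have hF₀ : F 0 = 0 := by simp [F, hfa]
  have hF : DifferentiableOn ℂ F (ball 0 1) :=
    hf.comp ((differentiableOn_blaschkeFactor ha').mono ball_subset_closedBall)
      (mapsTo_blaschkeFactor_ball ha')
  have hF₁ : MapsTo F (ball 0 1) (closedBall (F 0) 1) := by
    rw [hF₀]
    exact hf₁.comp (mapsTo_blaschkeFactor_ball ha')
  have hφ := mapsTo_blaschkeFactor_ball ha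
  refine ⟨dslope F 0 ∘ blaschkeFactor a, ?_, fun z hz ↦ ?_, fun z hz ↦ ?_⟩
  · have hdslope : DifferentiableOn ℂ (dslope F 0) (ball 0 1) :=
      (Complex.differentiableOn_dslope (ball_mem_nhds 0 one_pos)).2 hF
    exact hdslope.comp ((differentiableOn_blaschkeFactor ha).mono ball_subset_closedBall) hφ
  · simpa using Complex.norm_dslope_le_div_of_mapsTo_ball hF hF₁ (hφ hz)
  · have hFφ : F (blaschkeFactor a z) = f z :=
      congrArg f (blaschkeFactor_neg_blaschkeFactor ha (mem_ball_zero_iff.1 hz).le)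
    simpa [hFφ] using (sub_smul_dslope_of_zero hF₀ (blaschkeFactor a z)).symm

lemma norm_le_prod_norm_blaschkeFactor_of_completeSpace [CompleteSpace E] {S : Finset ℂ}
    (hS : ∀ a ∈ S, ‖a‖ < 1) {f : ℂ → E} (hf : DifferentiableOn ℂ f (ball 0 1))
    (hf₁ : MapsTo f (ball 0 1) (closedBall 0 1)) (hfS : ∀ a ∈ S, f a = 0) {z : ℂ}
    (hz : z ∈ ball 0 1) :
    ‖f z‖ ≤ ∏ a ∈ S, ‖blaschkeFactor a z‖ := by
  induction S using Finset.induction_on generalizing f with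
  | empty => simpa using hf₁ hz
  | insert a S haS ih =>
    rw [Finset.forall_mem_insert] at hS hfS
    obtain ⟨k, hk, hk₁, hfk⟩ := exists_eq_blaschkeFactor_smul_of_eq_zero hf hf₁ hS.1 hfS.1
    have hkS : ∀ b ∈ S, k b = 0 := fun b hb ↦ by
      have hb₁ := hS.2 b hb
      have hφb : blaschkeFactor a b ≠ 0 := fun h ↦
        haS ((blaschkeFactor_eq_zero_iff hS.1 hb₁.le).1 h ▸ hb)
      refine (smul_eq_zero.1 ?_).resolve_left hφb
      rw [← hfS.2 b hb, hfk (mem_ball_zero_iff.2 hb₁)]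
    rw [Finset.prod_insert haS, hfk hz, norm_smul]
    gcongr
    exact ih hS.2 hk hk₁ hkS

lemma norm_le_prod_norm_blaschkeFactor {S : Finset ℂ} (hS : ∀ a ∈ S, ‖a‖ < 1) {f : ℂ → E}
    (hf : DifferentiableOn ℂ f (ball 0 1)) (hf₁ : MapsTo f (ball 0 1) (closedBall 0 1))
    (hfS : ∀ a ∈ S, f a = 0) {z : ℂ} (hz : z ∈ ball 0 1) :
    ‖f z‖ ≤ ∏ a ∈ S, ‖blaschkeFactor a z‖ := by
  let e : E →L[ℂ] UniformSpace.Completion E := UniformSpace.Completion.toComplL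
  simpa [e] using norm_le_prod_norm_blaschkeFactor_of_completeSpace hS (f := e ∘ f)
    (e.differentiable.comp_differentiableOn hf) (fun w hw ↦ by simpa [e] using hf₁ hw)
    (fun a ha ↦ by simp [hfS a ha]) hz

lemma norm_le_pow_card_of_forall_eq_zero {r : ℝ} (hr : r < 1) {S : Finset ℂ}
    (hS : ∀ a ∈ S, ‖a‖ ≤ r) {f : ℂ → E} (hf : DifferentiableOn ℂ f (ball 0 1))
    (hf₁ : MapsTo f (ball 0 1) (closedBall 0 1)) (hfS : ∀ a ∈ S, f a = 0) {z : ℂ}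
    (hz : z ∈ ball 0 1) :
    ‖f z‖ ≤ ((r + ‖z‖) / (1 + r * ‖z‖)) ^ S.card := by
  have hz₁ : ‖z‖ < 1 := mem_ball_zero_iff.1 hz
  have hfactor : ∀ a ∈ S, ‖blaschkeFactor a z‖ ≤ (r + ‖z‖) / (1 + r * ‖z‖) := fun a ha ↦
    calc ‖blaschkeFactor a z‖
        ≤ (‖a‖ + ‖z‖) / (1 + ‖a‖ * ‖z‖) := norm_blaschkeFactor_le ((hS a ha).trans_lt hr) hz₁.le
      _ ≤ (r + ‖z‖) / (1 + r * ‖z‖) :=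
        (strictMonoOn_add_div_one_add_mul (norm_nonneg z) hz₁).monotoneOn (norm_nonneg a)
          ((norm_nonneg a).trans (hS a ha)) (hS a ha)
  calc ‖f z‖ ≤ ∏ a ∈ S, ‖blaschkeFactor a z‖ :=
        norm_le_prod_norm_blaschkeFactor (fun a ha ↦ (hS a ha).trans_lt hr) hf hf₁ hfS hz
    _ ≤ ∏ _a ∈ S, (r + ‖z‖) / (1 + r * ‖z‖) :=
        Finset.prod_le_prod (fun _ _ ↦ norm_nonneg _) hfactor
    _ = ((r + ‖z‖) / (1 + r * ‖z‖)) ^ S.card := Finset.prod_const _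

theorem fornaess_sibony_lemma_part1_general {r : ℝ} (hr : r < 1) {g : ℂ → E}
    (hg : DifferentiableOn ℂ g (ball 0 1)) (hg₁ : MapsTo g (ball 0 1) (ball 0 1))
    {S : Finset ℂ} (hS : ∀ a ∈ S, ‖a‖ < r) (hgS : ∀ a ∈ S, g a = 0) {z : ℂ} (hz : ‖z‖ < r) :
    ‖g z‖ < (2 * r / (1 + r ^ 2)) ^ S.card := by
  have hz₁ : z ∈ ball 0 1 := mem_ball_zero_iff.2 (hz.trans hr)
  have hr₀ : 0 ≤ r := (norm_nonneg z).trans hz.le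
  rcases S.eq_empty_or_nonempty with rfl | hne
  · simpa using hg₁ hz₁
  have hlt : (r + ‖z‖) / (1 + r * ‖z‖) < 2 * r / (1 + r ^ 2) := by
    rw [add_comm r, mul_comm r, two_mul, sq]
    exact strictMonoOn_add_div_one_add_mul hr₀ hr (norm_nonneg z) hr₀ hz
  calc ‖g z‖ ≤ ((r + ‖z‖) / (1 + r * ‖z‖)) ^ S.card :=
        norm_le_pow_card_of_forall_eq_zero hr (fun a ha ↦ (hS a ha).le) hg
          (hg₁.mono_right ball_subset_closedBall) hgS hz₁
    _ < (2 * r / (1 + r ^ 2)) ^ S.card :=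
        pow_lt_pow_left₀ hlt (by positivity) hne.card_ne_zero

end NormedSpace

/-- Fornæss–Sibony Lemma (part 1): there is a universal constant `c₀ ∈ (0,1)` such that
any holomorphic `g` on the unit disk with `‖g‖ < 1` having `N` zeros in the disk of
radius `1/2` satisfies `‖g‖ < c₀ ^ N` on the disk of radius `1/2`. -/
theorem fornaess_sibony_lemma_part1 :
    ∃ c₀ : ℝ, 0 < c₀ ∧ c₀ < 1 ∧
      ∀ (N : ℕ) (g : ℂ → ℂ),
        (∀ z : ℂ, ‖z‖ < 1 → DifferentiableAt ℂ g z) →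
        (∀ z : ℂ, ‖z‖ < 1 → ‖g z‖ < 1) →
        (∃ S : Finset ℂ, (∀ a ∈ S, ‖a‖ < 1/2) ∧ S.card = N ∧ ∀ a ∈ S, g a = 0) →
        ∀ z : ℂ, ‖z‖ < 1/2 → ‖g z‖ < c₀ ^ N := by
  refine ⟨2 * (1 / 2) / (1 + (1 / 2) ^ 2), by norm_num, by norm_num, ?_⟩
  rintro _ g hg hg₁ ⟨S, hS, rfl, hgS⟩ z hz
  exact fornaess_sibony_lemma_part1_general (by norm_num)
    (fun w hw ↦ (hg w (mem_ball_zero_iff.1 hw)).differentiableWithinAt)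
    (fun w hw ↦ mem_ball_zero_iff.2 (hg₁ w (mem_ball_zero_iff.1 hw))) hS hgS hz
end

section
/- Let g : ℂ → ℂ be holomorphic on the open unit disk {z : ℂ | ‖z‖ < 1} with ‖g z‖ < 1 for all z with ‖z‖ < 1. If η is a real number with 0 < η < 1 and ‖g z‖ ≤ η for all z with ‖z‖ < 1/4, then ‖g z‖ ≤ η ^ (1/2 : ℝ) (i.e. ‖g z‖ ≤ Real.sqrt η) for all z with ‖z‖ < 1/2. -/
/-!
Fix `z` with `‖z - c‖ < r ^ (1 - t) * R ^ t` and apply Hadamard's three lines theorem on the strip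
`0 ≤ Re w ≤ 1` to `w ↦ f (c + (R / r) ^ (w - t) • (z - c))`. The line `Re w = 0` is mapped into the
ball of radius `r`, the line `Re w = 1` into the ball of radius `R`, and `t` to `z`. The lemma is
the case `r = 1 / 4`, `R = 1`, `t = 1 / 2`.
-/

open Complex Complex.HadamardThreeLines Metric Set

section Radii

variable {r R : ℝ}

theorem div_rpow_sub_mul_rpow_mul_rpow (hr : 0 < r) (hR : 0 < R) (s t : ℝ) :
    (R / r) ^ (s - t) * (r ^ (1 - t) * R ^ t) = r ^ (1 - s) * R ^ s := by
  have hr_exp : r ^ (1 - t) = r ^ (1 - s) * r ^ (s - t) := by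
    rw [← Real.rpow_add hr, sub_add_sub_cancel]
  have hR_exp : R ^ s = R ^ (s - t) * R ^ t := by
    rw [← Real.rpow_add hR, sub_add_cancel]
  rw [Real.div_rpow hR.le hr.le, hr_exp, hR_exp]
  field_simp

theorem sqrt_mul_eq_rpow_mul_rpow (hr : 0 ≤ r) (R : ℝ) :
    √(r * R) = r ^ (1 - 1 / 2 : ℝ) * R ^ (1 / 2 : ℝ) := by
  rw [Real.sqrt_mul hr, sub_half, Real.sqrt_eq_rpow, Real.sqrt_eq_rpow]

theorem rpow_one_sub_mul_rpow_le_right (hr : 0 < r) (hrR : r ≤ R) {s : ℝ} (hs : s ≤ 1) :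
    r ^ (1 - s) * R ^ s ≤ R := by
  have hR : 0 < R := hr.trans_le hrR
  calc r ^ (1 - s) * R ^ s ≤ R ^ (1 - s) * R ^ s := by gcongr
    _ = R := by rw [← Real.rpow_add hR, sub_add_cancel, Real.rpow_one]

end Radii

section ComplexDilation

variable {F : Type*} [NormedAddCommGroup F] [NormedSpace ℂ F] {c z : F} {q r R t : ℝ} {w : ℂ}

/-- The holomorphic curve `w ↦ c + q ^ (w - t) • (z - c)` in the complex line through `c` and `z`,
normalized to pass through `z` at `w = t`. It maps vertical lines into spheres centered at `c`,
which turns bounds on balls into bounds on vertical lines. -/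
noncomputable def complexDilation (q t : ℝ) (c z : F) (w : ℂ) : F :=
  c + (q : ℂ) ^ (w - t) • (z - c)

@[simp]
theorem complexDilation_ofReal_self (q t : ℝ) (c z : F) : complexDilation q t c z t = z := by
  simp [complexDilation]

theorem differentiable_complexDilation (hq : q ≠ 0) (t : ℝ) (c z : F) :
    Differentiable ℂ (complexDilation q t c z) := by
  have hpow : Differentiable ℂ fun w : ℂ ↦ (q : ℂ) ^ (w - t) :=
    (differentiable_id.sub_const _).const_cpow (Or.inl (ofReal_ne_zero.mpr hq))
  exact (hpow.smul_const (z - c)).const_add c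

theorem norm_complexDilation_sub (hq : 0 < q) (t : ℝ) (c z : F) (w : ℂ) :
    ‖complexDilation q t c z w - c‖ = q ^ (w.re - t) * ‖z - c‖ := by
  rw [complexDilation, add_sub_cancel_left, norm_smul, norm_cpow_eq_rpow_re_of_pos hq, sub_re,
    ofReal_re]

theorem complexDilation_mem_ball (hr : 0 < r) (hR : 0 < R)
    (hz : z ∈ ball c (r ^ (1 - t) * R ^ t)) (w : ℂ) :
    complexDilation (R / r) t c z w ∈ ball c (r ^ (1 - w.re) * R ^ w.re) := by
  have hq : 0 < R / r := div_pos hR hr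
  rw [mem_ball_iff_norm] at hz
  rw [mem_ball_iff_norm, norm_complexDilation_sub hq,
    ← div_rpow_sub_mul_rpow_mul_rpow hr hR w.re t]
  gcongr

theorem complexDilation_mem_ball_of_re_le_one (hr : 0 < r) (hrR : r ≤ R)
    (hz : z ∈ ball c (r ^ (1 - t) * R ^ t)) (hw : w.re ≤ 1) :
    complexDilation (R / r) t c z w ∈ ball c R :=
  ball_subset_ball (rpow_one_sub_mul_rpow_le_right hr hrR hw)
    (complexDilation_mem_ball hr (hr.trans_le hrR) hz w)

theorem diffContOnCl_comp_complexDilation {E : Type*} [NormedAddCommGroup E] [NormedSpace ℂ E]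
    {f : F → E} (hf : DifferentiableOn ℂ f (ball c R)) (hr : 0 < r) (hrR : r ≤ R)
    (hz : z ∈ ball c (r ^ (1 - t) * R ^ t)) :
    DiffContOnCl ℂ (f ∘ complexDilation (R / r) t c z) (verticalStrip 0 1) := by
  have hq : R / r ≠ 0 := (div_pos (hr.trans_le hrR) hr).ne'
  have hclosure : closure (verticalStrip 0 1) = verticalClosedStrip 0 1 := by
    rw [verticalStrip, closure_preimage_re, closure_Ioo zero_ne_one, verticalClosedStrip]
  apply DifferentiableOn.diffContOnCl
  rw [hclosure]
  exact hf.comp (differentiable_complexDilation hq t c z).differentiableOn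
    fun w hw ↦ complexDilation_mem_ball_of_re_le_one hr hrR hz hw.2

end ComplexDilation

section ThreeBalls

variable {E F : Type*} [NormedAddCommGroup E] [NormedSpace ℂ E] [NormedAddCommGroup F]
  [NormedSpace ℂ F] {f : F → E} {c z : F} {r R t a b : ℝ}

theorem norm_le_rpow_mul_rpow_of_mem_ball (hr : 0 < r) (hrR : r ≤ R)
    (ht : t ∈ Icc (0 : ℝ) 1) (hf : DifferentiableOn ℂ f (ball c R))
    (ha : ∀ x ∈ ball c r, ‖f x‖ ≤ a) (hb : ∀ x ∈ ball c R, ‖f x‖ ≤ b)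
    (hz : z ∈ ball c (r ^ (1 - t) * R ^ t)) :
    ‖f z‖ ≤ a ^ (1 - t) * b ^ t := by
  have hbound : ∀ w : ℂ, w.re ≤ 1 → ‖f (complexDilation (R / r) t c z w)‖ ≤ b :=
    fun w hw ↦ hb _ (complexDilation_mem_ball_of_re_le_one hr hrR hz hw)
  have hleft : ∀ w ∈ re ⁻¹' {0}, ‖f (complexDilation (R / r) t c z w)‖ ≤ a := by
    intro w (hw : w.re = 0)
    apply ha
    simpa [hw] using complexDilation_mem_ball hr (hr.trans_le hrR) hz w
  have hbdd : BddAbove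
      ((norm ∘ f ∘ complexDilation (R / r) t c z) '' verticalClosedStrip 0 1) :=
    ⟨b, forall_mem_image.mpr fun w hw ↦ hbound w hw.2⟩
  simpa using norm_le_interp_of_mem_verticalClosedStrip₀₁' (f ∘ complexDilation (R / r) t c z)
    (z := t) ht (diffContOnCl_comp_complexDilation hf hr hrR hz) hbdd hleft
    fun w hw ↦ hbound w (le_of_eq hw)

theorem fornaess_sibony_lemma_part2_general (hr : 0 < r) (hrR : r ≤ R)
    (hf : DifferentiableOn ℂ f (ball c R))
    (ha : ∀ x ∈ ball c r, ‖f x‖ ≤ a) (hb : ∀ x ∈ ball c R, ‖f x‖ ≤ b)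
    (hz : z ∈ ball c √(r * R)) :
    ‖f z‖ ≤ √(a * b) := by
  have ha0 : 0 ≤ a := (norm_nonneg _).trans (ha c (mem_ball_self hr))
  rw [sqrt_mul_eq_rpow_mul_rpow hr.le] at hz
  rw [sqrt_mul_eq_rpow_mul_rpow ha0]
  exact norm_le_rpow_mul_rpow_of_mem_ball hr hrR ⟨by norm_num, by norm_num⟩ hf ha hb hz

end ThreeBalls

/-- Fornæss–Sibony Lemma (part 2): if a holomorphic function bounded by `1` on the unit
disk is bounded by `η < 1` on the disk of radius `1/4`, then it is bounded by `η^{1/2}`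
on the disk of radius `1/2`. -/
theorem fornaess_sibony_lemma_part2 (g : ℂ → ℂ)
    (hg : ∀ z : ℂ, ‖z‖ < 1 → DifferentiableAt ℂ g z)
    (hb : ∀ z : ℂ, ‖z‖ < 1 → ‖g z‖ < 1)
    (η : ℝ) (hη0 : 0 < η) (hη1 : η < 1)
    (hsmall : ∀ z : ℂ, ‖z‖ < 1/4 → ‖g z‖ ≤ η) :
    ∀ z : ℂ, ‖z‖ < 1/2 → ‖g z‖ ≤ Real.sqrt η := by
  intro z hz
  have hradius : √(1 / 4 * 1) = (1 / 2 : ℝ) := by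
    rw [Real.sqrt_eq_iff_mul_self_eq] <;> norm_num
  simpa only [mul_one] using fornaess_sibony_lemma_part2_general (by norm_num) (by norm_num)
    (fun x hx ↦ (hg x (mem_ball_zero_iff.mp hx)).differentiableWithinAt)
    (fun x hx ↦ hsmall x (mem_ball_zero_iff.mp hx))
    (fun x hx ↦ (hb x (mem_ball_zero_iff.mp hx)).le)
    (by rwa [hradius, mem_ball_zero_iff])
end

section
/- Let δ > 0 and let f : ℂ → ℂ be holomorphic on the open ball B(0, δ) ⊆ ℂ. Let (εₙ) be a sequence of nonzero complex numbers with εₙ → 0, and suppose that for every n and every z ∈ B(0, δ/2) one has z - εₙ ∈ B(0, δ) and f z ≠ f (z - εₙ). Then the derivative of f has no zero in B(0, δ/2): for every z ∈ B(0, δ/2), deriv f z ≠ 0. -/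
open Metric Filter

/-!
The difference quotients `(f z - f (z - εₙ)) / εₙ` are holomorphic and zero-free near `z₀`, and
they converge locally uniformly to `deriv f`. By Hurwitz's theorem (the maximum principle for their
reciprocals on a small disc) `deriv f` is either zero-free or identically zero near `z₀`; in the
latter case `f` would be locally constant, and `f z₀ = f (z₀ - εₙ)` for large `n`.
-/

open Set
open scoped Topology

section DifferenceQuotient

variable {𝕜 E : Type*} [NontriviallyNormedField 𝕜] [NormedAddCommGroup E] [NormedSpace 𝕜 E]
  {f : 𝕜 → E}

theorem tendsto_slope_of_hasStrictDerivAt {f' : E} {x : 𝕜} (hf : HasStrictDerivAt f f' x) :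
    Tendsto (fun p : 𝕜 × 𝕜 ↦ slope f p.1 p.2) (𝓝[{p | p.1 ≠ p.2}] (x, x)) (𝓝 f') := by
  rw [Metric.tendsto_nhds]
  intro c hc
  have hlinear := hf.hasStrictFDerivAt.isLittleO.def (half_pos hc)
  filter_upwards [nhdsWithin_le_nhds hlinear, self_mem_nhdsWithin] with p hp hne
  have hsub : p.1 - p.2 ≠ 0 := sub_ne_zero.2 hne
  have hslope : slope f p.1 p.2 - f' = (p.1 - p.2)⁻¹ • (f p.1 - f p.2 - (p.1 - p.2) • f') := by
    rw [slope_comm, slope_def_module, smul_sub _ (f p.1 - f p.2), inv_smul_smul₀ hsub]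
  calc dist (slope f p.1 p.2) f'
      = ‖f p.1 - f p.2 - (p.1 - p.2) • f'‖ / ‖p.1 - p.2‖ := by
        rw [dist_eq_norm, hslope, norm_smul, norm_inv, inv_mul_eq_div]
    _ ≤ c / 2 := (div_le_iff₀ (norm_pos_iff.2 hsub)).2 hp
    _ < c := half_lt_self hc

theorem tendstoLocallyUniformlyOn_slope_sub {ι : Type*} {l : Filter ι} {ε : ι → 𝕜} {f' : 𝕜 → E}
    {s : Set 𝕜} (hf : ∀ z ∈ s, HasStrictDerivAt f (f' z) z) (hf' : ContinuousOn f' s)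
    (hε : Tendsto ε l (𝓝[≠] 0)) :
    TendstoLocallyUniformlyOn (fun n z ↦ slope f (z - ε n) z) f' l s := by
  rw [tendstoLocallyUniformlyOn_iff_forall_tendsto]
  intro x hx
  rw [tendsto_nhdsWithin_iff] at hε
  have hpoint : Tendsto (fun p : ι × 𝕜 ↦ p.2) (l ×ˢ 𝓝[s] x) (𝓝 x) :=
    tendsto_nhdsWithin_iff.1 tendsto_snd |>.1
  have hpair : Tendsto (fun p : ι × 𝕜 ↦ (p.2 - ε p.1, p.2)) (l ×ˢ 𝓝[s] x)
      (𝓝[{p | p.1 ≠ p.2}] (x, x)) := by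
    refine tendsto_nhdsWithin_iff.2 ⟨?_, ?_⟩
    · simpa using (hpoint.sub (hε.1.comp tendsto_fst)).prodMk_nhds hpoint
    · filter_upwards [tendsto_fst.eventually hε.2] with p hp
      simpa using hp
  exact (((hf' x hx).tendsto.comp tendsto_snd).prodMk_nhds
    ((tendsto_slope_of_hasStrictDerivAt (hf x hx)).comp hpair)).mono_right
      (nhds_le_uniformity (f' x))

theorem differentiableOn_slope_sub {s t : Set 𝕜} {h : 𝕜} (hs : DifferentiableOn 𝕜 f s)
    (ht : DifferentiableOn 𝕜 f t) (hst : MapsTo (· - h) s t) :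
    DifferentiableOn 𝕜 (fun z ↦ slope f (z - h) z) s := by
  simp only [slope_def_module, sub_sub_cancel]
  exact (hs.sub (ht.comp (differentiableOn_id.sub_const h) hst)).const_smul h⁻¹

end DifferenceQuotient

section BoundedDomain

variable {E : Type*} [NormedAddCommGroup E] [NormedSpace ℂ E] [Nontrivial E] {U : Set E} {z : E}

theorem le_norm_of_forall_mem_frontier_le_norm {f : E → ℂ} {m : ℝ} (hU : Bornology.IsBounded U)
    (hf : DiffContOnCl ℂ f U) (hf₀ : ∀ w ∈ closure U, f w ≠ 0)
    (hm : ∀ w ∈ frontier U, m ≤ ‖f w‖) (hz : z ∈ closure U) : m ≤ ‖f z‖ := by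
  obtain hm₀ | hm₀ := le_or_gt m 0
  · exact hm₀.trans (norm_nonneg _)
  have hfrontier : ∀ w ∈ frontier U, ‖f⁻¹ w‖ ≤ m⁻¹ := fun w hw ↦ by
    simpa only [Pi.inv_apply, norm_inv] using inv_anti₀ hm₀ (hm w hw)
  have hinv : ‖f z‖⁻¹ ≤ m⁻¹ := by
    simpa only [Pi.inv_apply, norm_inv] using
      Complex.norm_le_of_forall_mem_frontier_norm_le hU (hf.inv hf₀) hfrontier hz
  exact (inv_le_inv₀ (norm_pos_iff.2 (hf₀ z hz)) hm₀).1 hinv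

theorem ne_zero_of_tendstoUniformlyOn_closure [ProperSpace E] {ι : Type*} {l : Filter ι}
    {F : ι → E → ℂ} {f : E → ℂ} (hU : Bornology.IsBounded U)
    (hFf : TendstoUniformlyOn F f l (closure U))
    (hF : ∃ᶠ n in l, DiffContOnCl ℂ (F n) U ∧ ∀ w ∈ closure U, F n w ≠ 0)
    (hf : ∀ w ∈ frontier U, f w ≠ 0) (hz : z ∈ closure U) : f z ≠ 0 := by
  have hcont : ContinuousOn f (closure U) :=
    hFf.continuousOn (hF.mono fun n hn ↦ hn.1.continuousOn)
  have hcompact : IsCompact (frontier U) :=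
    hU.isCompact_closure.of_isClosed_subset isClosed_frontier frontier_subset_closure
  obtain ⟨m, hm₀, hm⟩ : ∃ m, 0 < m ∧ ∀ w ∈ frontier U, m ≤ ‖f w‖ :=
    hcompact.exists_forall_le' (hcont.mono frontier_subset_closure).norm
      fun w hw ↦ norm_pos_iff.2 (hf w hw)
  have hclose := Metric.tendstoUniformlyOn_iff.1 hFf (m / 2) (half_pos hm₀)
  have hlower : ∃ᶠ n in l, m / 2 ≤ ‖F n z‖ := by
    refine (hF.and_eventually hclose).mono fun n ⟨⟨hdiff, hne⟩, hdist⟩ ↦ ?_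
    refine le_norm_of_forall_mem_frontier_le_norm hU hdiff hne (fun w hw ↦ ?_) hz
    have hdist' := hdist w (frontier_subset_closure hw)
    rw [dist_eq_norm] at hdist'
    linarith [hm w hw, norm_sub_norm_le (f w) (F n w)]
  have hlimit : m / 2 ≤ ‖f z‖ := ge_of_tendsto_of_frequently (hFf.tendsto_at hz).norm hlower
  exact norm_pos_iff.1 ((half_pos hm₀).trans_le hlimit)

end BoundedDomain

/-- **Hurwitz's theorem**. -/
theorem eqOn_zero_or_forall_ne_zero_of_tendstoLocallyUniformlyOn {ι : Type*} {l : Filter ι}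
    {F : ι → ℂ → ℂ} {f : ℂ → ℂ} {U : Set ℂ} (hU : IsOpen U) (hUc : IsPreconnected U)
    (hFf : TendstoLocallyUniformlyOn F f l U) (hF : ∀ᶠ n in l, DifferentiableOn ℂ (F n) U)
    (hF₀ : ∃ᶠ n in l, ∀ z ∈ U, F n z ≠ 0) :
    EqOn f 0 U ∨ ∀ z ∈ U, f z ≠ 0 := by
  have : l.NeBot := neBot_iff.2 fun hl ↦ frequently_bot (hl ▸ hF₀)
  have hf : AnalyticOnNhd ℂ f U := (hFf.differentiableOn hF hU).analyticOnNhd hU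
  refine or_iff_not_imp_left.2 fun hzero z₀ hz₀ ↦ ?_
  have hisolated : ∀ᶠ z in 𝓝[≠] z₀, f z ≠ 0 := not_frequently.1 fun hfreq ↦
    hzero (hf.eqOn_zero_of_preconnected_of_frequently_eq_zero hUc hz₀ hfreq)
  obtain ⟨r, hr, hball⟩ := nhds_basis_closedBall.mem_iff.1
    (inter_mem (eventually_nhdsWithin_iff.1 hisolated) (hU.mem_nhds hz₀))
  have hsub : closure (ball z₀ r) ⊆ U := by
    rw [closure_ball z₀ hr.ne']
    exact fun z hz ↦ (hball hz).2
  have hsphere : ∀ z ∈ frontier (ball z₀ r), f z ≠ 0 := by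
    rw [frontier_ball z₀ hr.ne']
    exact fun z hz ↦ (hball (sphere_subset_closedBall hz)).1 (ne_of_mem_sphere hz hr.ne')
  refine ne_zero_of_tendstoUniformlyOn_closure isBounded_ball
    ((tendstoLocallyUniformlyOn_iff_forall_isCompact hU).1 hFf _ hsub
      isBounded_ball.isCompact_closure)
    ?_ hsphere (subset_closure (mem_ball_self hr))
  exact (hF₀.and_eventually hF).mono fun n ⟨hne, hdiff⟩ ↦
    ⟨(hdiff.mono hsub).diffContOnCl, fun z hz ↦ hne z (hsub hz)⟩

theorem eventuallyEq_const_of_eventually_hasDerivAt_zero {𝕜 E : Type*} [RCLike 𝕜]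
    [NormedAddCommGroup E] [NormedSpace 𝕜 E] {f : 𝕜 → E} {z₀ : 𝕜}
    (hf : ∀ᶠ z in 𝓝 z₀, HasDerivAt f 0 z) : f =ᶠ[𝓝 z₀] fun _ ↦ f z₀ := by
  obtain ⟨r, hr, hball⟩ := Metric.eventually_nhds_iff_ball.1 hf
  filter_upwards [ball_mem_nhds z₀ hr] with z hz
  exact isOpen_ball.is_const_of_deriv_eq_zero (convex_ball z₀ r).isPreconnected
    (fun w hw ↦ (hball w hw).differentiableAt.differentiableWithinAt)
    (fun w hw ↦ (hball w hw).deriv) hz (mem_ball_self hr)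

theorem deriv_ne_zero_of_translates_disjoint_general {ι : Type*} {l : Filter ι} [l.NeBot]
    {f : ℂ → ℂ} {z₀ : ℂ} (hf : AnalyticAt ℂ f z₀) {ε : ι → ℂ} (hε : Tendsto ε l (𝓝 0))
    {U : Set ℂ} (hU : U ∈ 𝓝 z₀) (hne : ∀ᶠ n in l, ∀ z ∈ U, f z ≠ f (z - ε n)) :
    deriv f z₀ ≠ 0 := by
  obtain ⟨r, hr, hball⟩ := Metric.mem_nhds_iff.1 (inter_mem hf.eventually_analyticAt hU)
  have hanalytic : AnalyticOnNhd ℂ f (ball z₀ r) := fun z hz ↦ (hball hz).1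
  have hsub : ball z₀ (r / 2) ⊆ ball z₀ r := ball_subset_ball (half_le_self hr.le)
  have hz₀ : z₀ ∈ ball z₀ (r / 2) := mem_ball_self (half_pos hr)
  have hε₀ : Tendsto ε l (𝓝[≠] 0) := tendsto_nhdsWithin_iff.2 ⟨hε, hne.mono fun n hn h ↦
    hn z₀ (mem_of_mem_nhds hU) (by rw [h, sub_zero])⟩
  have hlimit : TendstoLocallyUniformlyOn (fun n z ↦ slope f (z - ε n) z) (deriv f) l
      (ball z₀ (r / 2)) :=
    tendstoLocallyUniformlyOn_slope_sub (fun z hz ↦ (hanalytic z (hsub hz)).hasStrictDerivAt)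
      (hanalytic.deriv.continuousOn.mono hsub) hε₀
  have hdiff : ∀ᶠ n in l, DifferentiableOn ℂ (fun z ↦ slope f (z - ε n) z) (ball z₀ (r / 2)) := by
    filter_upwards [hε.eventually_mem (ball_mem_nhds 0 (half_pos hr))] with n hn
    refine differentiableOn_slope_sub (hanalytic.differentiableOn.mono hsub)
      hanalytic.differentiableOn fun z hz ↦ ?_
    simpa only [ball_sub_ball (half_pos hr) (half_pos hr), sub_zero, add_halves] using
      Set.sub_mem_sub hz hn
  have hslope : ∀ᶠ n in l, ∀ z ∈ ball z₀ (r / 2), slope f (z - ε n) z ≠ 0 :=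
    hne.mono fun n hn z hz h ↦ hn z (hball (hsub hz)).2 (slope_eq_zero_iff.1 h).symm
  obtain hzero | hnonzero := eqOn_zero_or_forall_ne_zero_of_tendstoLocallyUniformlyOn isOpen_ball
    (convex_ball z₀ (r / 2)).isPreconnected hlimit hdiff hslope.frequently
  · have hconst : f =ᶠ[𝓝 z₀] fun _ ↦ f z₀ := by
      refine eventuallyEq_const_of_eventually_hasDerivAt_zero ?_
      filter_upwards [isOpen_ball.mem_nhds hz₀] with z hz
      exact (hanalytic z (hsub hz)).differentiableAt.hasDerivAt.congr_deriv (hzero hz)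
    have htranslate : Tendsto (fun n ↦ z₀ - ε n) l (𝓝 z₀) := by
      simpa using tendsto_const_nhds.sub hε
    obtain ⟨n, hn, heq⟩ := (hne.and (htranslate.eventually hconst)).exists
    exact absurd heq.symm (hn z₀ (mem_of_mem_nhds hU))
  · exact hnonzero z₀ hz₀

/-- Analytic core of Proposition 3.1: if `f` is holomorphic on `B(0, δ)` and there are
nonzero `εₙ → 0` such that `f z ≠ f (z - εₙ)` for all `z ∈ B(0, δ/2)` (with
`z - εₙ ∈ B(0, δ)`), then `deriv f` has no zero on `B(0, δ/2)`. -/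
theorem deriv_ne_zero_of_translates_disjoint (δ : ℝ) (hδ : 0 < δ) (f : ℂ → ℂ)
    (hf : ∀ z ∈ Metric.ball (0 : ℂ) δ, DifferentiableAt ℂ f z)
    (ε : ℕ → ℂ) (hε0 : ∀ n, ε n ≠ 0) (hεlim : Tendsto ε atTop (nhds 0))
    (hmem : ∀ n, ∀ z ∈ Metric.ball (0 : ℂ) (δ / 2), z - ε n ∈ Metric.ball (0 : ℂ) δ)
    (hne : ∀ n, ∀ z ∈ Metric.ball (0 : ℂ) (δ / 2), f z ≠ f (z - ε n)) :
    ∀ z ∈ Metric.ball (0 : ℂ) (δ / 2), deriv f z ≠ 0 := by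
  intro z hz
  have hfz : AnalyticAt ℂ f z := DifferentiableOn.analyticAt
    (fun w hw ↦ (hf w hw).differentiableWithinAt)
    (isOpen_ball.mem_nhds (ball_subset_ball (half_le_self hδ.le) hz))
  exact deriv_ne_zero_of_translates_disjoint_general hfz hεlim (isOpen_ball.mem_nhds hz)
    (.of_forall hne)
end

section
/- Let Λ be an additive subgroup of ℂ that is discrete and cocompact (a ℤ-lattice of rank 2, so that ℂ/Λ is a one-dimensional complex torus 𝕋¹). Let f : ℂ → ℂ be an entire function and suppose that the induced map ℂ → ℂ⧸Λ sending z to the coset f z + Λ converges to some limit along the cocompact filter on ℂ (i.e. the reduction of f modulo Λ has a limit as ‖z‖ → ∞). Then f is constant. -/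
open Filter

/-!
Let `p` be the reduction, a covering map, and `U` an evenly covered neighbourhood of the limit of
`p ∘ f` at infinity. The exterior of a large ball is connected and `f` maps it into `p ⁻¹' U`, hence
into a single sheet over `U`. On that sheet `p` is a homeomorphism, so `f` itself converges at
infinity and Liouville's theorem applies. In several variables one restricts to complex lines.
-/

open Metric Topology Bornology

theorem isPreconnected_compl_closedBall_of_one_lt_rank {E : Type*} [NormedAddCommGroup E]
    [NormedSpace ℝ E] (hE : 1 < Module.rank ℝ E) (x : E) (r : ℝ) :
    IsPreconnected (closedBall x r)ᶜ := by
  obtain hr | hr := lt_or_ge r 0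
  · rw [closedBall_eq_empty.mpr hr, Set.compl_empty]
    exact isPreconnected_univ
  have polar_coordinates :
      (fun q : ℝ × E ↦ x + q.1 • q.2) '' (Set.Ioi r ×ˢ sphere 0 1) = (closedBall x r)ᶜ := by
    ext z
    simp only [Set.mem_image, Prod.exists, Set.mem_prod, Set.mem_Ioi, mem_sphere_zero_iff_norm,
      Set.mem_compl_iff, mem_closedBall, not_le, dist_eq_norm]
    constructor
    · rintro ⟨ρ, u, ⟨hρ, hu⟩, rfl⟩
      rwa [add_sub_cancel_left, norm_smul, hu, mul_one, Real.norm_of_nonneg (hr.trans hρ.le)]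
    · intro hz
      have hzx : ‖z - x‖ ≠ 0 := (hr.trans_lt hz).ne'
      refine ⟨‖z - x‖, ‖z - x‖⁻¹ • (z - x), ⟨hz, ?_⟩, ?_⟩
      · rw [norm_smul, norm_inv, norm_norm, inv_mul_cancel₀ hzx]
      · rw [smul_inv_smul₀ hzx, add_sub_cancel]
  rw [← polar_coordinates]
  exact (isPreconnected_Ioi.prod (isPreconnected_sphere hE 0 1)).image _ (by fun_prop)

section Lifting

variable {E X Y I ι : Type*} [TopologicalSpace E] [TopologicalSpace X] [TopologicalSpace Y]
  [TopologicalSpace I] {p : E → X} {L : X} {f : Y → E} {l : Filter Y} {P : ι → Prop}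
  {s : ι → Set Y}

theorem exists_tendsto_of_tendsto_comp_of_trivialization [DiscreteTopology I] [l.NeBot]
    (t : Bundle.Trivialization I p) (hL : L ∈ t.baseSet) (hf : Continuous f)
    (hl : l.HasBasis P s) (hs : ∀ i, P i → IsPreconnected (s i))
    (h : Tendsto (p ∘ f) l (𝓝 L)) : ∃ e, p e = L ∧ Tendsto f l (𝓝 e) := by
  obtain ⟨i, hi, hsi⟩ := hl.mem_iff.mp (h (t.open_baseSet.mem_nhds hL))
  have mapsTo_source : Set.MapsTo f (s i) t.source := fun y hy ↦ t.mem_source.mpr (hsi hy)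
  have continuousOn_comp : ContinuousOn (t ∘ f) (s i) :=
    t.continuousOn_toFun.comp hf.continuousOn mapsTo_source
  obtain ⟨y₀, hy₀⟩ := nonempty_of_mem (hl.mem_of_mem hi)
  have sheet_eq : ∀ y ∈ s i, (t (f y)).2 = (t (f y₀)).2 := fun y hy ↦
    (hs i hi).constant continuousOn_comp.snd hy hy₀
  let sheet : X → E := fun x ↦ t.toOpenPartialHomeomorph.symm (x, (t (f y₀)).2)
  have sheet_continuousAt : ContinuousAt sheet L :=
    (t.toOpenPartialHomeomorph.symm.continuousAt (t.mem_target.mpr hL)).comp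
      (Continuous.prodMk_left _).continuousAt
  have sheet_comp_eq : sheet ∘ p ∘ f =ᶠ[l] f := by
    filter_upwards [hl.mem_of_mem hi] with y hy
    simp only [sheet, Function.comp_apply, ← sheet_eq y hy]
    exact t.symm_apply_mk_proj (mapsTo_source hy)
  exact ⟨sheet L, t.proj_symm_apply' hL, (sheet_continuousAt.tendsto.comp h).congr' sheet_comp_eq⟩

theorem exists_tendsto_of_tendsto_comp_of_isEvenlyCovered [l.NeBot]
    (hp : IsEvenlyCovered p L I) (hf : Continuous f)
    (hl : l.HasBasis P s) (hs : ∀ i, P i → IsPreconnected (s i))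
    (h : Tendsto (p ∘ f) l (𝓝 L)) : ∃ e, p e = L ∧ Tendsto f l (𝓝 e) := by
  have : Nonempty I := by
    obtain ⟨-, U, hLU, hU, -, H, -⟩ := hp
    obtain ⟨y, hy⟩ := (h.eventually_mem (hU.mem_nhds hLU)).exists
    exact ⟨(H ⟨f y, hy⟩).2⟩
  have := hp.discreteTopology_fiber
  exact exists_tendsto_of_tendsto_comp_of_trivialization hp.toTrivialization
    hp.mem_toTrivialization_baseSet hf hl hs h

end Lifting

theorem tendsto_smul_const_cobounded {𝕜 E : Type*} [NormedField 𝕜] [NormedAddCommGroup E]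
    [NormedSpace 𝕜 E] {x : E} (hx : x ≠ 0) :
    Tendsto (fun t : 𝕜 ↦ t • x) (cobounded 𝕜) (cobounded E) := by
  simp only [← tendsto_norm_atTop_iff_cobounded, norm_smul]
  exact tendsto_norm_cobounded_atTop.atTop_mul_const (norm_pos_iff.mpr hx)

theorem entire_const_of_reduction_tendsto_cocompact_general {E F X I : Type*}
    [NormedAddCommGroup E] [NormedSpace ℂ E] [NormedAddCommGroup F] [NormedSpace ℂ F]
    [TopologicalSpace X] [TopologicalSpace I] {p : F → X} {L : X} (hp : IsEvenlyCovered p L I)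
    {f : E → F} (hf : Differentiable ℂ f) (hlim : Tendsto (p ∘ f) (cobounded E) (𝓝 L)) :
    ∃ c : F, ∀ z : E, f z = c := by
  refine ⟨f 0, fun z ↦ ?_⟩
  obtain rfl | hz := eq_or_ne z 0
  · rfl
  let g : ℂ → F := fun t ↦ f (t • z)
  have hg : Differentiable ℂ g := by fun_prop
  have hglim : Tendsto (p ∘ g) (cobounded ℂ) (𝓝 L) :=
    hlim.comp (tendsto_smul_const_cobounded hz)
  obtain ⟨c, -, hc⟩ := exists_tendsto_of_tendsto_comp_of_isEvenlyCovered hp hg.continuous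
    (hasBasis_cobounded_compl_closedBall (0 : ℂ))
    (fun r _ ↦ isPreconnected_compl_closedBall_of_one_lt_rank (by simp) 0 r) hglim
  rw [cobounded_eq_cocompact] at hc
  calc
    f z = g 1 := by simp [g]
    _ = c := hg.apply_eq_of_tendsto_cocompact 1 hc
    _ = g 0 := (hg.apply_eq_of_tendsto_cocompact 0 hc).symm
    _ = f 0 := by simp [g]

/-- Analytic core of Proposition 4.3: if `Λ ⊆ ℂ` is a discrete cocompact lattice and
`f` is entire with `f mod Λ` converging along the cocompact filter (i.e. as
`‖z‖ → ∞`), then `f` is constant. -/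
theorem entire_const_of_reduction_tendsto_cocompact (Λ : AddSubgroup ℂ)
    [DiscreteTopology Λ] [CompactSpace (ℂ ⧸ Λ)]
    (f : ℂ → ℂ) (hf : Differentiable ℂ f)
    (hlim : ∃ L : ℂ ⧸ Λ, Tendsto (fun z : ℂ => ((f z : ℂ ⧸ Λ))) (cocompact ℂ) (nhds L)) :
    ∃ c : ℂ, ∀ z : ℂ, f z = c := by
  obtain ⟨L, hL⟩ := hlim
  have hΛ := (Λ.isAddQuotientCoveringMap_of_comm ⟨inferInstance⟩).isCoveringMap
  exact entire_const_of_reduction_tendsto_cocompact_general (hΛ L) hf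
    (cobounded_eq_cocompact (α := ℂ) ▸ hL)
end
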